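/- Fix t1, t2 > 0. Then the limit as N → ∞ of (1/N) · ∫_0^{N/t1} dx1 ∫_0^{N/t2} dx2 ∫_0^2 dτ ∫_ℝ dy · p_{N^τ/(t1∧t2) - 1/t1}(y + x2 - x1) · p_{N^τ/(t1∧t2) - 1/t2}(y) · min(1, |N^{-τ} y|^{1/2}) equals 0. -/

import Mathlib

open MeasureTheory Real Filter

/-- The heat kernel `p_t(x) = (2πt)^{-1/2} exp(-x²/(2t))`. -/
noncomputable def heatKernel (t x : ℝ) : ℝ :=
  Real.exp (-x ^ 2 / (2 * t)) / Real.sqrt (2 * Real.pi * t)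

lemma hk_eq (s : ℝ) (hs : 0 < s) (x : ℝ) :
    heatKernel s x = ProbabilityTheory.gaussianPDFReal 0 s.toNNReal x := by
  unfold heatKernel ProbabilityTheory.gaussianPDFReal
  rw [Real.coe_toNNReal s hs.le, sub_zero, div_eq_inv_mul]

lemma hk_nonneg (s x : ℝ) : 0 ≤ heatKernel s x := by
  unfold heatKernel; positivity

lemma hk_meas : Measurable (fun p : ℝ × ℝ => heatKernel p.1 p.2) := by
  unfold heatKernel; fun_prop

lemma hk_lint (s : ℝ) (hs : 0 < s) : ∫⁻ x, ‖heatKernel s x‖ₑ = 1 := by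
  rw [← ProbabilityTheory.lintegral_gaussianPDFReal_eq_one 0 (v := s.toNNReal)
    (by simpa using hs)]
  refine lintegral_congr fun x => ?_
  rw [Real.enorm_of_nonneg (hk_nonneg s x), hk_eq s hs]

lemma hk_mom (s : ℝ) (hs : 0 < s) (d c : ℝ) (hd : 0 ≤ d) (hc : 0 ≤ c) :
    ∫⁻ y, ‖heatKernel s y‖ₑ * ENNReal.ofReal (d + c * y ^ 2) = ENNReal.ofReal (d + c * s) := by
  have hv : s.toNNReal ≠ 0 := by simpa using hs
  have h1 : ∫⁻ y, ‖heatKernel s y‖ₑ * ENNReal.ofReal (d + c * y ^ 2) =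
      ∫⁻ y, ENNReal.ofReal (d + c * y ^ 2) ∂(ProbabilityTheory.gaussianReal 0 s.toNNReal) := by
    rw [ProbabilityTheory.gaussianReal_of_var_ne_zero _ hv,
      lintegral_withDensity_eq_lintegral_mul _ (ProbabilityTheory.measurable_gaussianPDF _ _)
        (by fun_prop)]
    refine lintegral_congr fun x => ?_
    rw [Real.enorm_of_nonneg (hk_nonneg s x), hk_eq s hs]
    rfl
  have hm : MemLp (fun x : ℝ => x) 2 (ProbabilityTheory.gaussianReal 0 s.toNNReal) :=
    ProbabilityTheory.memLp_id_gaussianReal' 2 (by simp)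
  have hi : Integrable (fun y : ℝ => y ^ 2) (ProbabilityTheory.gaussianReal 0 s.toNNReal) :=
    hm.integrable_sq
  have hvar := ProbabilityTheory.variance_fun_id_gaussianReal (μ := 0) (v := s.toNNReal)
  rw [ProbabilityTheory.variance_eq_integral (by fun_prop)] at hvar
  rw [ProbabilityTheory.integral_id_gaussianReal] at hvar
  simp only [sub_zero] at hvar
  rw [h1, ← ofReal_integral_eq_lintegral_ofReal (f := fun y : ℝ => d + c * y ^ 2) ((integrable_const d).add (hi.const_mul c))
    (Eventually.of_forall fun y => by positivity)]
  rw [integral_add (integrable_const d) (hi.const_mul c), integral_const_mul, hvar,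
    Real.coe_toNNReal s hs.le]
  simp

lemma sqrt_bound (z d : ℝ) (hd : 0 < d) : |z| ^ ((1:ℝ)/2) ≤ d + z ^ 2 / d ^ 3 := by
  rw [← Real.sqrt_eq_rpow]
  set r := √|z| with hr
  have hr0 : 0 ≤ r := Real.sqrt_nonneg _
  have hz : z ^ 2 = r ^ 4 := by
    rw [← sq_abs, ← Real.sq_sqrt (abs_nonneg z)]; ring
  rw [hz]
  rcases le_total r d with h | h
  · have : 0 ≤ r ^ 4 / d ^ 3 := by positivity
    linarith
  · have : r ≤ r ^ 4 / d ^ 3 := by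
      rw [le_div_iff₀ (by positivity)]
      have : d ^ 3 ≤ r ^ 3 := by gcongr
      nlinarith
    linarith

lemma inner_y (N a t τ : ℝ) (hN : 1 < N) (ha : 0 < a) (ht : 0 < t)
    (hs : 0 < N ^ τ / a - 1 / t) :
    ∫⁻ y, ‖heatKernel (N ^ τ / a - 1 / t) y‖ₑ * ‖min 1 (|N ^ (-τ) * y| ^ ((1:ℝ)/2))‖ₑ ≤
      ENNReal.ofReal ((1 + 1 / a) * exp (-(log N / 4) * τ)) := by
  have hN0 : 0 < N := by linarith
  set d := exp (-(log N / 4) * τ) with hd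
  have hd0 : 0 < d := exp_pos _
  have hNm : N ^ (-τ) = d ^ 4 := by
    rw [Real.rpow_def_of_pos hN0, hd, ← Real.exp_nat_mul]; congr 1; push_cast; ring
  have hNp : N ^ τ * d ^ 4 = 1 := by
    rw [← hNm, ← Real.rpow_add hN0]; simp
  calc _ ≤ ∫⁻ y, ‖heatKernel (N ^ τ / a - 1 / t) y‖ₑ * ENNReal.ofReal (d + d ^ 5 * y ^ 2) := by
        refine lintegral_mono fun y => ?_
        dsimp only
        gcongr
        rw [Real.enorm_of_nonneg (by positivity)]
        refine ENNReal.ofReal_le_ofReal ((min_le_right _ _).trans ?_)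
        refine (sqrt_bound _ d hd0).trans (le_of_eq ?_)
        rw [hNm]; field_simp
    _ = ENNReal.ofReal (d + d ^ 5 * (N ^ τ / a - 1 / t)) :=
        hk_mom _ hs _ _ hd0.le (by positivity)
    _ ≤ _ := by
        refine ENNReal.ofReal_le_ofReal ?_
        have h1 : d ^ 5 * (N ^ τ / a) = d / a := by
          calc _ = d * (N ^ τ * d ^ 4) / a := by ring
            _ = _ := by rw [hNp]; ring
        have h2 : 0 ≤ d ^ 5 * (1 / t) := by positivity
        have h3 : (1 + 1 / a) * d = d + d / a := by ring
        rw [mul_sub, h1, h3]; linarith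

lemma inner_tau (N C : ℝ) (hN : 1 < N) (hC : 0 ≤ C) :
    ∫⁻ τ in Set.Ioc (0:ℝ) 2, ENNReal.ofReal (C * exp (-(log N / 4) * τ)) ≤
      ENNReal.ofReal (C * (4 / log N)) := by
  have hl : 0 < log N := Real.log_pos hN
  have ha : -(log N / 4) < 0 := by linarith
  calc _ ≤ ∫⁻ τ in Set.Ioi (0:ℝ), ENNReal.ofReal (C * exp (-(log N / 4) * τ)) :=
        lintegral_mono_set Set.Ioc_subset_Ioi_self
    _ = _ := by
        rw [← ofReal_integral_eq_lintegral_ofReal ((integrableOn_exp_mul_Ioi ha 0).const_mul C)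
          (Eventually.of_forall fun y => by positivity), integral_const_mul,
          integral_exp_mul_Ioi ha 0]
        congr 2
        simp

lemma enorm_ii (f : ℝ → ℝ) (b : ℝ) (hb : 0 ≤ b) :
    ‖∫ x in (0:ℝ)..b, f x‖ₑ ≤ ∫⁻ x in Set.Ioc 0 b, ‖f x‖ₑ := by
  rw [intervalIntegral.integral_of_le hb]
  exact enorm_integral_le_lintegral_enorm _

lemma var_pos (N a t τ : ℝ) (hN : 1 < N) (ha : 0 < a) (hat : a ≤ t) (hτ : 0 < τ) :
    0 < N ^ τ / a - 1 / t := by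
  have h1 : 1 < N ^ τ := Real.one_lt_rpow hN hτ
  have h2 : 1 / t ≤ 1 / a := one_div_le_one_div_of_le ha hat
  have h3 : 1 / a < N ^ τ / a := by gcongr
  linarith

lemma fixed_x1 (N a t1 t2 x1 : ℝ) (hN : 1 < N) (ha : 0 < a) (h1 : a ≤ t1) (h2 : a ≤ t2) :
    ‖∫ x2 in (0:ℝ)..(N / t2), ∫ τ in (0:ℝ)..2, ∫ y : ℝ,
          heatKernel (N ^ τ / a - 1 / t1) (y + x2 - x1) *
            heatKernel (N ^ τ / a - 1 / t2) y *
              min 1 (|N ^ (-τ) * y| ^ ((1:ℝ)/2))‖ₑ ≤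
      ENNReal.ofReal ((1 + 1 / a) * (4 / log N)) := by
  have hb : 0 ≤ N / t2 := div_nonneg (by linarith) (by linarith)
  have hNm : Measurable (fun τ : ℝ => N ^ τ) := by
    have : Continuous (fun τ : ℝ => N ^ τ) := Real.continuous_const_rpow (by linarith)
    exact this.measurable
  have hNm' : Measurable (fun τ : ℝ => N ^ (-τ)) := hNm.comp measurable_neg
  have hF : Measurable (fun p : ℝ × ℝ × ℝ =>
      ‖heatKernel (N ^ p.2.1 / a - 1 / t1) (p.2.2 + p.1 - x1)‖ₑ *
        (‖heatKernel (N ^ p.2.1 / a - 1 / t2) p.2.2‖ₑ *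
          ‖min 1 (|N ^ (-p.2.1) * p.2.2| ^ ((1:ℝ)/2))‖ₑ)) := by
    have e1 : Measurable (fun p : ℝ × ℝ × ℝ => N ^ p.2.1) := hNm.comp (by fun_prop)
    have e2 : Measurable (fun p : ℝ × ℝ × ℝ => N ^ (-p.2.1)) := hNm'.comp measurable_snd.fst
    have k1 : Measurable (fun p : ℝ × ℝ × ℝ =>
        heatKernel (N ^ p.2.1 / a - 1 / t1) (p.2.2 + p.1 - x1)) :=
      hk_meas.comp (g := fun q : ℝ × ℝ => heatKernel q.1 q.2)
        (f := fun p : ℝ × ℝ × ℝ => (N ^ p.2.1 / a - 1 / t1, p.2.2 + p.1 - x1)) (by fun_prop)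
    have k2 : Measurable (fun p : ℝ × ℝ × ℝ =>
        heatKernel (N ^ p.2.1 / a - 1 / t2) p.2.2) :=
      hk_meas.comp (g := fun q : ℝ × ℝ => heatKernel q.1 q.2)
        (f := fun p : ℝ × ℝ × ℝ => (N ^ p.2.1 / a - 1 / t2, p.2.2)) (by fun_prop)
    have k3 : Measurable (fun p : ℝ × ℝ × ℝ =>
        min 1 (|N ^ (-p.2.1) * p.2.2| ^ ((1:ℝ)/2))) := by
      refine measurable_const.min (Measurable.pow_const ?_ _)
      exact (e2.mul measurable_snd.snd).abs
    exact k1.enorm.mul (k2.enorm.mul k3.enorm)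
  calc _ ≤ ∫⁻ x2 in Set.Ioc 0 (N / t2), ∫⁻ τ in Set.Ioc (0:ℝ) 2, ∫⁻ y : ℝ,
          ‖heatKernel (N ^ τ / a - 1 / t1) (y + x2 - x1)‖ₑ *
            (‖heatKernel (N ^ τ / a - 1 / t2) y‖ₑ *
              ‖min 1 (|N ^ (-τ) * y| ^ ((1:ℝ)/2))‖ₑ) := by
        refine (enorm_ii _ _ hb).trans (lintegral_mono fun x2 => ?_)
        refine (enorm_ii _ _ (by norm_num)).trans (lintegral_mono fun τ => ?_)
        refine (enorm_integral_le_lintegral_enorm _).trans (lintegral_mono fun y => ?_)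
        dsimp only
        rw [enorm_mul, enorm_mul, mul_assoc]
    _ ≤ ∫⁻ x2 : ℝ, ∫⁻ τ in Set.Ioc (0:ℝ) 2, ∫⁻ y : ℝ,
          ‖heatKernel (N ^ τ / a - 1 / t1) (y + x2 - x1)‖ₑ *
            (‖heatKernel (N ^ τ / a - 1 / t2) y‖ₑ *
              ‖min 1 (|N ^ (-τ) * y| ^ ((1:ℝ)/2))‖ₑ) := setLIntegral_le_lintegral _ _
    _ = ∫⁻ τ in Set.Ioc (0:ℝ) 2, ∫⁻ x2 : ℝ, ∫⁻ y : ℝ,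
          ‖heatKernel (N ^ τ / a - 1 / t1) (y + x2 - x1)‖ₑ *
            (‖heatKernel (N ^ τ / a - 1 / t2) y‖ₑ *
              ‖min 1 (|N ^ (-τ) * y| ^ ((1:ℝ)/2))‖ₑ) := by
        refine lintegral_lintegral_swap (Measurable.aemeasurable ?_)
        refine Measurable.lintegral_prod_right' (f := fun q : (ℝ × ℝ) × ℝ =>
          ‖heatKernel (N ^ q.1.2 / a - 1 / t1) (q.2 + q.1.1 - x1)‖ₑ *
            (‖heatKernel (N ^ q.1.2 / a - 1 / t2) q.2‖ₑ *
              ‖min 1 (|N ^ (-q.1.2) * q.2| ^ ((1:ℝ)/2))‖ₑ)) ?_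
        exact hF.comp (f := fun q : (ℝ × ℝ) × ℝ => (q.1.1, q.1.2, q.2)) (by fun_prop)
    _ ≤ ∫⁻ τ in Set.Ioc (0:ℝ) 2, ENNReal.ofReal ((1 + 1 / a) * exp (-(log N / 4) * τ)) := by
        refine setLIntegral_mono (by fun_prop) fun τ hτ => ?_
        rw [lintegral_lintegral_swap]
        swap
        · exact Measurable.aemeasurable
            (hF.comp (f := fun q : ℝ × ℝ => (q.1, τ, q.2)) (by fun_prop))
        refine le_trans (le_of_eq ?_) (inner_y N a t2 τ hN ha (by linarith)
          (var_pos N a t2 τ hN ha h2 hτ.1))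
        refine lintegral_congr fun y => ?_
        have hm : Measurable (fun x : ℝ => heatKernel (N ^ τ / a - 1 / t1) (y + x - x1)) :=
          hk_meas.comp (f := fun x : ℝ => (N ^ τ / a - 1 / t1, y + x - x1)) (by fun_prop)
        rw [lintegral_mul_const _ hm.enorm]
        have : ∫⁻ x, ‖heatKernel (N ^ τ / a - 1 / t1) (y + x - x1)‖ₑ = 1 := by
          rw [← hk_lint _ (var_pos N a t1 τ hN ha h1 hτ.1),
            ← lintegral_add_right_eq_self
              (fun x => ‖heatKernel (N ^ τ / a - 1 / t1) x‖ₑ) (y - x1)]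
          refine lintegral_congr fun x => ?_
          congr 2; ring
        rw [this, one_mul]
    _ ≤ _ := inner_tau N _ hN (by positivity)

theorem stmt_2 (t1 t2 : ℝ) (ht1 : 0 < t1) (ht2 : 0 < t2) :
    Tendsto (fun N : ℝ =>
      (1 / N) *
        ∫ x1 in (0:ℝ)..(N / t1), ∫ x2 in (0:ℝ)..(N / t2), ∫ τ in (0:ℝ)..2, ∫ y : ℝ,
          heatKernel (N ^ τ / min t1 t2 - 1 / t1) (y + x2 - x1) *
            heatKernel (N ^ τ / min t1 t2 - 1 / t2) y *
              min 1 (|N ^ (-τ) * y| ^ ((1:ℝ)/2)))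
      atTop (nhds 0) := by
  have ha : 0 < min t1 t2 := lt_min ht1 ht2
  have hlim : Tendsto (fun N : ℝ => (1 / t1) * ((1 + 1 / min t1 t2) * (4 / log N)))
      atTop (nhds 0) := by
    have h := (Real.tendsto_log_atTop.const_div_atTop 4)
    simpa using (h.const_mul (1 + 1 / min t1 t2)).const_mul (1 / t1)
  refine squeeze_zero_norm' ?_ hlim
  filter_upwards [eventually_gt_atTop 1] with N hN
  have hN0 : 0 < N := by linarith
  have hl : 0 < log N := Real.log_pos hN
  have key : ∀ x1 : ℝ, ‖∫ x2 in (0:ℝ)..(N / t2), ∫ τ in (0:ℝ)..2, ∫ y : ℝ,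
          heatKernel (N ^ τ / min t1 t2 - 1 / t1) (y + x2 - x1) *
            heatKernel (N ^ τ / min t1 t2 - 1 / t2) y *
              min 1 (|N ^ (-τ) * y| ^ ((1:ℝ)/2))‖ ≤ (1 + 1 / min t1 t2) * (4 / log N) := by
    intro x1
    have h := fixed_x1 N _ t1 t2 x1 hN ha (min_le_left _ _) (min_le_right _ _)
    rw [← ofReal_norm] at h
    exact (ENNReal.ofReal_le_ofReal_iff (by positivity)).1 h
  have h := intervalIntegral.norm_integral_le_of_norm_le_const (a := 0) (b := N / t1)
    (fun x _ => key x)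
  rw [norm_mul, Real.norm_of_nonneg (by positivity : 0 ≤ 1 / N)]
  rw [sub_zero, abs_of_nonneg (by positivity)] at h
  calc _ ≤ 1 / N * ((1 + 1 / min t1 t2) * (4 / log N) * (N / t1)) := by gcongr
    _ = _ := by field_simp
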